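/- Let J ⊆ Δ. For each w ∈ V^J with w ≠ z^J there exist w' ∈ V^J and s ∈ S such that w <_J w', ℓ((sw)^J) < ℓ(w), and ℓ((sw')^J) ≥ ℓ(w'). -/

import Mathlib

/-! Common framework: a reduced (crystallographic) root system `Φ` in a real vector
space `V`, with Weyl group `W` (generated by the reflections `s_α`, `α ∈ Φ`, inside the
group of linear automorphisms of `V`), a base `Δ` of simple roots with positive system
`Pos = Φ⁺`, and the associated combinatorics. -/

open scoped Classical Pointwise

namespace PaperSp

variable {V : Type} [AddCommGroup V] [Module ℝ V]

/-- The data of a reduced crystallographic root system in `V`:  a finite spanning set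
`Phi` of nonzero vectors together with, for each root `α`, a linear functional
`pairing α = ⟨·, α∨⟩` taking the value `2` at `α`, such that the associated reflections
`s_α : β ↦ β − ⟨β, α∨⟩α` preserve `Phi`, all pairings are integral, and the only
multiples of a root `α` which are roots are `±α`. -/
structure RootSystemData (V : Type) [AddCommGroup V] [Module ℝ V] : Type where
  Phi : Set V
  pairing : V → V →ₗ[ℝ] ℝ
  pairing_self : ∀ α, α ∈ Phi → pairing α α = 2
  finite : Phi.Finite
  span_top : Submodule.span ℝ Phi = ⊤
  zero_not_mem : (0 : V) ∉ Phi
  crystallographic : ∀ α ∈ Phi, ∀ β ∈ Phi, ∃ n : ℤ, pairing α β = (n : ℝ)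
  reduced : ∀ α ∈ Phi, ∀ t : ℝ, t • α ∈ Phi → t = 1 ∨ t = -1
  reflect_mem : ∀ α ∈ Phi, ∀ β ∈ Phi, β - pairing α β • α ∈ Phi

/-- The reflection `s_α` associated to a root `α` (the identity if `α ∉ Φ`). -/
noncomputable def RootSystemData.refl (R : RootSystemData V) (α : V) : V ≃ₗ[ℝ] V :=
  if h : α ∈ R.Phi then Module.reflection (R.pairing_self α h) else 1

/-- The set of reflections `{s_α : α ∈ K}` associated to a set `K` of roots. -/
noncomputable def refls (R : RootSystemData V) (K : Set V) : Set (V ≃ₗ[ℝ] V) :=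
  {s | ∃ α ∈ K, s = R.refl α}

/-- The Weyl group `W`, generated by all reflections `s_α`, `α ∈ Φ`. -/
noncomputable def weylGroup (R : RootSystemData V) : Subgroup (V ≃ₗ[ℝ] V) :=
  Subgroup.closure (refls R R.Phi)

/-- The subgroup `W_J` generated by the reflections `s_α`, `α ∈ J`. -/
noncomputable def WsubJ (R : RootSystemData V) (J : Set V) : Subgroup (V ≃ₗ[ℝ] V) :=
  Subgroup.closure (refls R J)

/-- The word length of `w` with respect to a generating set `S` of a group. -/
noncomputable def lengthWrt {G : Type*} [Group G] (S : Set G) (w : G) : ℕ :=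
  sInf {n | ∃ ls : List G, ls.length = n ∧ (∀ x ∈ ls, x ∈ S) ∧ ls.prod = w}

/-- The length function `ℓ` on `W` with respect to the simple reflections
`S = {s_α : α ∈ Δ}`. -/
noncomputable def len (R : RootSystemData V) (Δ : Set V) (w : V ≃ₗ[ℝ] V) : ℕ :=
  lengthWrt (refls R Δ) w

/-- `Pos` and `Δ` form a positive system with base `Δ` for the root system `R`:
`Φ = Pos ⊔ (−Pos)`, `Δ ⊆ Pos` is linearly independent, and every positive root is a
nonnegative integral combination of simple roots. -/
structure IsBase (R : RootSystemData V) (Pos Δ : Set V) : Prop where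
  pos_sub : Pos ⊆ R.Phi
  mem_or_neg : ∀ α ∈ R.Phi, α ∈ Pos ∨ -α ∈ Pos
  not_both : ∀ α : V, ¬(α ∈ Pos ∧ -α ∈ Pos)
  delta_sub : Δ ⊆ Pos
  indep : LinearIndependent ℝ (fun a : Δ => (a : V))
  decomp : ∀ β ∈ Pos, ∃ c : V →₀ ℕ, (c.support : Set V) ⊆ Δ ∧
    β = c.sum (fun a m => (m : ℝ) • a)

/-- The set `W^J = {w ∈ W : w(α) ∈ Φ⁺ for all α ∈ J}` of minimal length representatives
of `W/W_J`. -/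
noncomputable def WupJ (R : RootSystemData V) (Pos : Set V) (J : Set V) :
    Set (V ≃ₗ[ℝ] V) :=
  {w | w ∈ weylGroup R ∧ ∀ α ∈ J, w α ∈ Pos}

/-- The set `V^J = W^J \ ⋃_{α ∈ Δ\J} W^{J∪{α}}`. -/
noncomputable def VupJ (R : RootSystemData V) (Pos Δ : Set V) (J : Set V) :
    Set (V ≃ₗ[ℝ] V) :=
  {w | w ∈ WupJ R Pos J ∧ ∀ α ∈ Δ, α ∉ J → w ∉ WupJ R Pos (J ∪ {α})}

/-- `Φ_J(1) = Φ⁻ \ (Φ⁻ ∩ W_J·J)`. -/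
noncomputable def PhiJone (R : RootSystemData V) (Pos : Set V) (J : Set V) : Set V :=
  (R.Phi \ Pos) \ {β | ∃ v ∈ WsubJ R J, ∃ α ∈ J, β = v α}

/-- `Φ_J(w) = w · Φ_J(1)`. -/
noncomputable def PhiJ (R : RootSystemData V) (Pos : Set V) (J : Set V)
    (w : V ≃ₗ[ℝ] V) : Set V :=
  (fun x => w x) '' (PhiJone R Pos J)

/-- `hProjJ R Pos J pJ` says that `pJ` is the projection `w ↦ (w)^J` sending an element
of `W` to the unique element of `W^J` in the coset `w W_J`. -/
noncomputable def IsProjJ (R : RootSystemData V) (Pos : Set V) (J : Set V)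
    (pJ : (V ≃ₗ[ℝ] V) → (V ≃ₗ[ℝ] V)) : Prop :=
  ∀ w ∈ weylGroup R, pJ w ∈ WupJ R Pos J ∧ (pJ w)⁻¹ * w ∈ WsubJ R J

/-- The product `s_i ⋯ s_1` of the first `i` members of a sequence in a group. -/
noncomputable def chainProd {G : Type*} [Group G] (s : ℕ → G) (i : ℕ) : G :=
  (((List.range' 1 i).map s).reverse).prod

/-- The chain `w^(0) = w`, `w^(i) = (s_i ⋯ s_1 w)^J` associated to `w` and a sequence
of simple reflections. -/
noncomputable def chainElt {G : Type*} [Group G] (pJ : G → G) (s : ℕ → G) (w : G)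
    (i : ℕ) : G :=
  if i = 0 then w else pJ (chainProd s i * w)

/-- The partial order `<_J`:  `w <_J w'` iff there are simple reflections
`s_1, …, s_r` (`r ≥ 1`) such that, with `w^(i) = (s_i ⋯ s_1 w)^J`, the lengths
`ℓ(w^(i))` are strictly increasing and `w^(r) = w'`.  Taking `pJ = id`
(and `J = ∅`) gives the weak left order `<_∅`. -/
noncomputable def ltJ {G : Type*} [Group G] (S : Set G) (ℓ : G → ℕ) (pJ : G → G)
    (w w' : G) : Prop :=
  ∃ r : ℕ, 1 ≤ r ∧ ∃ s : ℕ → G,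
    (∀ m, 1 ≤ m → m ≤ r → s m ∈ S) ∧
    (∀ m, 1 ≤ m → m ≤ r → ℓ (chainElt pJ s w (m - 1)) < ℓ (chainElt pJ s w m)) ∧
    chainElt pJ s w r = w'

/-- `w` is the longest element of a subgroup `H` of `W` (with respect to `ℓ`). -/
noncomputable def IsLongestIn (R : RootSystemData V) (Δ : Set V)
    (H : Subgroup (V ≃ₗ[ℝ] V)) (w : V ≃ₗ[ℝ] V) : Prop :=
  w ∈ H ∧ ∀ v ∈ H, len R Δ v ≤ len R Δ w

end PaperSp

namespace PaperSp

section helpers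

variable {V : Type} [AddCommGroup V] [Module ℝ V]

lemma refl_apply (R : RootSystemData V) {α : V} (h : α ∈ R.Phi) (x : V) :
    R.refl α x = x - R.pairing α x • α := by
  simp [RootSystemData.refl, h, Module.reflection_apply]

lemma neg_mem_phi (R : RootSystemData V) {α : V} (h : α ∈ R.Phi) : -α ∈ R.Phi := by
  have := R.reflect_mem α h α h
  rw [R.pairing_self α h] at this
  convert this using 1
  module

lemma refl_self (R : RootSystemData V) {α : V} (h : α ∈ R.Phi) : R.refl α α = -α := by
  rw [refl_apply R h, R.pairing_self α h]; module

lemma refl_refl (R : RootSystemData V) {α : V} (h : α ∈ R.Phi) (x : V) :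
    R.refl α (R.refl α x) = x := by
  rw [refl_apply R h (R.refl α x), refl_apply R h x]
  simp only [map_sub, map_smul, R.pairing_self α h, smul_eq_mul]
  module

lemma refl_mul (R : RootSystemData V) {α : V} (h : α ∈ R.Phi) :
    R.refl α * R.refl α = 1 := by
  ext x; simp [refl_refl R h]

lemma refl_inv (R : RootSystemData V) {α : V} (h : α ∈ R.Phi) :
    (R.refl α)⁻¹ = R.refl α := inv_eq_of_mul_eq_one_left (refl_mul R h)

lemma refl_mem (R : RootSystemData V) {α : V} (h : α ∈ R.Phi) : R.refl α ∈ weylGroup R :=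
  Subgroup.subset_closure ⟨α, h, rfl⟩

lemma weyl_phi (R : RootSystemData V) {w : V ≃ₗ[ℝ] V} (hw : w ∈ weylGroup R) :
    ∀ β ∈ R.Phi, w β ∈ R.Phi := by
  unfold weylGroup at hw
  induction hw using Subgroup.closure_induction'' with
  | mem x hx =>
    obtain ⟨α, hα, rfl⟩ := hx
    intro β hβ; rw [refl_apply R hα]; exact R.reflect_mem α hα β hβ
  | inv_mem x hx =>
    obtain ⟨α, hα, rfl⟩ := hx
    intro β hβ; rw [refl_inv R hα, refl_apply R hα]; exact R.reflect_mem α hα β hβ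
  | one => intro β hβ; simpa using hβ
  | mul x y _ _ hx hy => intro β hβ; exact hx _ (hy _ hβ)

lemma inv_app (g : V ≃ₗ[ℝ] V) (x : V) : g⁻¹ (g x) = x := by
  rw [← LinearEquiv.mul_apply, inv_mul_cancel]; rfl

lemma app_inv (g : V ≃ₗ[ℝ] V) (x : V) : g (g⁻¹ x) = x := by
  rw [← LinearEquiv.mul_apply, mul_inv_cancel]; rfl

lemma conj_refl (R : RootSystemData V) {g : V ≃ₗ[ℝ] V} (hg : g ∈ weylGroup R) {α : V}
    (hα : α ∈ R.Phi) : g * R.refl α * g⁻¹ = R.refl (g α) := by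
  have hga := weyl_phi R hg α hα
  have hgi := weyl_phi R (inv_mem hg)
  have key : (R.pairing α).comp (g⁻¹ : V ≃ₗ[ℝ] V).toLinearMap = R.pairing (g α) := by
    refine Module.Dual.eq_of_preReflection_mapsTo (x := g α) R.finite R.span_top ?_ ?_ ?_ ?_
    · simp only [LinearMap.comp_apply, LinearEquiv.coe_coe, inv_app, R.pairing_self α hα]
    · intro β hβ
      have := weyl_phi R hg _ (R.reflect_mem α hα _ (hgi β hβ))
      simpa [Module.preReflection_apply, app_inv] using this
    · exact R.pairing_self _ hga
    · intro β hβ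
      simpa [Module.preReflection_apply] using R.reflect_mem _ hga _ hβ
  ext x
  have h2 : R.pairing (g α) x = R.pairing α (g⁻¹ x) := by rw [← key]; rfl
  rw [refl_apply R hga, h2]
  simp only [LinearEquiv.mul_apply, refl_apply R hα, map_sub, map_smul, app_inv]

/-- coordinates with respect to the simple roots -/
structure Co (Δ : Set V) (c : V → V →ₗ[ℝ] ℝ) : Prop where
  self : ∀ a ∈ Δ, c a a = 1
  ne : ∀ a ∈ Δ, ∀ b ∈ Δ, a ≠ b → c a b = 0
  ext : ∀ x, (∀ a ∈ Δ, c a x = 0) → x = 0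

variable {R : RootSystemData V} {Pos Δ : Set V}

lemma exists_co (hB : IsBase R Pos Δ) : ∃ c, Co Δ c := by
  have hsp : ⊤ ≤ Submodule.span ℝ (Set.range (fun a : Δ => (a : V))) := by
    rw [← R.span_top, Submodule.span_le]
    have hpos : ∀ β ∈ Pos, β ∈ Submodule.span ℝ (Set.range (fun a : Δ => (a : V))) := by
      intro β hβ
      obtain ⟨c, hc, rfl⟩ := hB.decomp β hβ
      refine Submodule.sum_mem _ fun a ha => Submodule.smul_mem _ _ (Submodule.subset_span ?_)
      exact ⟨⟨a, hc ha⟩, rfl⟩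
    intro β hβ
    rcases hB.mem_or_neg β hβ with h | h
    · exact hpos _ h
    · simpa using Submodule.neg_mem _ (hpos _ h)
  let b := Module.Basis.mk hB.indep hsp
  have hb : ∀ i, b i = i := fun i => by simp [b]
  refine ⟨fun a => if h : a ∈ Δ then b.coord ⟨a, h⟩ else 0, ?_, ?_, ?_⟩
  · intro a ha
    have := b.repr_self ⟨a, ha⟩
    rw [hb] at this
    simp only at this
    simp [ha, this]
  · intro a ha a' ha' hne
    have := b.repr_self ⟨a', ha'⟩
    rw [hb] at this
    simp only at this
    simp [ha, this, hne.symm]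
  · intro x hx
    apply b.ext_elem
    intro i
    have := hx i i.2
    simpa using this

lemma decompK (hB : IsBase R Pos Δ) {c : V → V →ₗ[ℝ] ℝ} (hc : Co Δ c) {K : Set V}
    {β : V} (hβ : β ∈ Pos) (hs : ∀ a ∈ Δ, a ∉ K → c a β = 0)
    (f : V →ₗ[ℝ] ℝ) (hf : ∀ a ∈ Δ, a ∈ K → 0 ≤ f a) : 0 ≤ f β := by
  obtain ⟨m, hm, hβe⟩ := hB.decomp β hβ
  have hco : ∀ a ∈ Δ, c a β = m a := by
    intro a ha
    rw [hβe, Finsupp.sum, map_sum]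
    rw [Finset.sum_eq_single a]
    · simp [hc.self a ha]
    · intro b hb hne
      simp [hc.ne a ha b (hm hb) hne.symm]
    · intro h; simp at h; simp [h]
  rw [hβe, Finsupp.sum, map_sum]
  refine Finset.sum_nonneg fun a ha => ?_
  rw [map_smul, smul_eq_mul]
  refine mul_nonneg (by positivity) (hf a (hm ha) ?_)
  by_contra hk
  have h0 := hs a (hm ha) hk
  rw [hco a (hm ha)] at h0
  simp at ha
  exact ha (by exact_mod_cast h0)

lemma co_nonneg (hB : IsBase R Pos Δ) {c : V → V →ₗ[ℝ] ℝ} (hc : Co Δ c)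
    {β : V} (hβ : β ∈ Pos) {a : V} (ha : a ∈ Δ) : 0 ≤ c a β := by
  refine decompK hB hc (K := Set.univ) hβ (by simp) _ ?_
  intro b hb _
  by_cases h : a = b
  · subst h; simp [hc.self a ha]
  · rw [hc.ne a ha b hb h]

lemma not_pos (hB : IsBase R Pos Δ) {β : V} (h : β ∈ R.Phi) : β ∉ Pos ↔ -β ∈ Pos :=
  ⟨fun h' => (hB.mem_or_neg β h).resolve_left h', fun h1 h2 => hB.not_both β ⟨h2, h1⟩⟩

lemma pos_of_co (hB : IsBase R Pos Δ) {c : V → V →ₗ[ℝ] ℝ} (hc : Co Δ c)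
    {β : V} (hβ : β ∈ R.Phi) {a : V} (ha : a ∈ Δ) (h : 0 < c a β) : β ∈ Pos := by
  by_contra hn
  have := co_nonneg hB hc ((not_pos hB hβ).1 hn) ha
  rw [map_neg] at this; linarith

lemma cone (hB : IsBase R Pos Δ) {c : V → V →ₗ[ℝ] ℝ} (hc : Co Δ c) {K : Set V}
    {β : V} (hβ : β ∈ Pos) (hs : ∀ a ∈ Δ, a ∉ K → c a β = 0)
    (f : V →ₗ[ℝ] V) (hf : ∀ a ∈ Δ, a ∈ K → f a ∈ Pos) (hp : f β ∈ R.Phi) : f β ∈ Pos := by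
  by_contra hn
  have h1 := (not_pos hB hp).1 hn
  have h0 : f β = 0 := by
    apply hc.ext
    intro a ha
    have h2 := co_nonneg hB hc h1 ha
    have h3 := decompK hB hc hβ hs ((c a).comp f)
      (fun b hb hk => co_nonneg hB hc (hf b hb hk) ha)
    rw [map_neg] at h2
    simp only [LinearMap.comp_apply] at h3
    linarith
  rw [h0] at hp
  exact R.zero_not_mem hp

lemma eq_of_supp (hB : IsBase R Pos Δ) {c : V → V →ₗ[ℝ] ℝ} (hc : Co Δ c)
    {β a : V} (hβ : β ∈ Pos) (ha : a ∈ Δ) (h : ∀ b ∈ Δ, b ≠ a → c b β = 0) : β = a := by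
  have h1 : β = c a β • a := by
    rw [← sub_eq_zero]
    apply hc.ext
    intro b hb
    by_cases hba : b = a
    · subst hba; simp [hc.self b hb]
    · simp [hc.ne b hb a ha hba, h b hb hba]
  have h2 : c a β • a ∈ R.Phi := h1 ▸ hB.pos_sub hβ
  have h3 := co_nonneg hB hc hβ ha
  rcases R.reduced a (hB.pos_sub (hB.delta_sub ha)) _ h2 with h4 | h4
  · rw [h1, h4]; simp
  · linarith

lemma simple_perm (hB : IsBase R Pos Δ) {β a : V} (hβ : β ∈ Pos) (ha : a ∈ Δ) (hne : β ≠ a) :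
    R.refl a β ∈ Pos := by
  obtain ⟨c, hc⟩ := exists_co hB
  have haP := hB.pos_sub (hB.delta_sub ha)
  have : ∃ b ∈ Δ, b ≠ a ∧ c b β ≠ 0 := by
    by_contra hcon
    push Not at hcon
    exact hne (eq_of_supp hB hc hβ ha hcon)
  obtain ⟨b, hb, hba, h0⟩ := this
  refine pos_of_co hB hc (weyl_phi R (refl_mem R haP) _ (hB.pos_sub hβ)) hb ?_
  rw [refl_apply R haP, map_sub, map_smul, hc.ne b hb a ha hba]
  simpa using lt_of_le_of_ne (co_nonneg hB hc hβ hb) h0.symm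

/-- inversion number -/
noncomputable def invN (Pos : Set V) (w : V ≃ₗ[ℝ] V) : ℕ := Set.ncard {β | β ∈ Pos ∧ w β ∉ Pos}

lemma fin_inv (hB : IsBase R Pos Δ) (w : V ≃ₗ[ℝ] V) : {β | β ∈ Pos ∧ w β ∉ Pos}.Finite :=
  R.finite.subset fun _ h => hB.pos_sub h.1

lemma invN_right (hB : IsBase R Pos Δ) {w : V ≃ₗ[ℝ] V} (hw : w ∈ weylGroup R) {a : V}
    (ha : a ∈ Δ) (h : w a ∉ Pos) : invN Pos (w * R.refl a) < invN Pos w := by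
  have haP := hB.pos_sub (hB.delta_sub ha)
  unfold invN
  rw [← Set.ncard_image_of_injective _ (R.refl a).injective]
  apply Set.ncard_lt_ncard _ (fin_inv hB w)
  rw [Set.ssubset_iff_of_subset]
  · refine ⟨a, ⟨hB.delta_sub ha, h⟩, ?_⟩
    rintro ⟨β, ⟨hβ, _⟩, he⟩
    have : β = -a := by rw [← refl_refl R haP β, he, refl_self R haP]
    exact hB.not_both a ⟨hB.delta_sub ha, this ▸ hβ⟩
  · rintro _ ⟨β, ⟨hβ, h2⟩, rfl⟩
    refine ⟨simple_perm hB hβ ha ?_, h2⟩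
    rintro rfl
    apply h2
    rw [LinearEquiv.mul_apply, refl_self R haP, map_neg]
    exact (not_pos hB (weyl_phi R hw _ haP)).1 h

lemma invN_left (hB : IsBase R Pos Δ) {w : V ≃ₗ[ℝ] V} {a : V}
    (ha : a ∈ Δ) (h : w⁻¹ a ∉ Pos) : invN Pos (R.refl a * w) ≤ invN Pos w := by
  apply Set.ncard_le_ncard _ (fin_inv hB w)
  rintro β ⟨hβ, h2⟩
  refine ⟨hβ, fun h3 => h2 ?_⟩
  refine simple_perm hB h3 ha ?_
  intro he
  have he' : w _ = a := he
  rw [← he', inv_app] at h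
  exact h hβ

lemma refl_gen_pos (hB : IsBase R Pos Δ) (n : ℕ) : ∀ β ∈ Pos, invN Pos (R.refl β) = n →
    R.refl β ∈ WsubJ R Δ := by
  induction n using Nat.strong_induction_on with
  | _ n ih =>
  intro β hβ hn
  by_cases hβΔ : β ∈ Δ
  · exact Subgroup.subset_closure ⟨β, hβΔ, rfl⟩
  have hβP := hB.pos_sub hβ
  obtain ⟨c, hc⟩ := exists_co hB
  have : ∃ a ∈ Δ, R.refl β a ∉ Pos := by
    by_contra hcon
    push Not at hcon
    have := cone hB hc (K := Set.univ) hβ (by simp) (R.refl β).toLinearMap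
      (fun a ha _ => hcon a ha) (weyl_phi R (refl_mem R hβP) _ hβP)
    simp only [LinearEquiv.coe_coe, refl_self R hβP] at this
    exact hB.not_both β ⟨hβ, this⟩
  obtain ⟨a, ha, hna⟩ := this
  have haP := hB.pos_sub (hB.delta_sub ha)
  have hne : β ≠ a := fun h => hβΔ (h ▸ ha)
  have hβ' := simple_perm hB hβ ha hne
  have hconj := conj_refl R (refl_mem R haP) hβP
  rw [refl_inv R haP] at hconj
  have hlt : invN Pos (R.refl (R.refl a β)) < n := by
    rw [← hconj, mul_assoc, ← hn]
    refine lt_of_le_of_lt (invN_left hB ha ?_) (invN_right hB (refl_mem R hβP) ha hna)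
    rw [mul_inv_rev, refl_inv R haP, refl_inv R hβP, LinearEquiv.mul_apply]
    have h1 := (not_pos hB (weyl_phi R (refl_mem R hβP) _ haP)).1 hna
    rw [not_pos hB (weyl_phi R (refl_mem R haP) _ (weyl_phi R (refl_mem R hβP) _ haP)), ← map_neg]
    refine simple_perm hB h1 ha ?_
    intro he
    rw [refl_apply R hβP] at he
    have h2 : a = (R.pairing β a / 2) • β := by
      have : (2:ℝ) • a = R.pairing β a • β := by
        rw [two_smul]; nth_rw 1 [← he]; abel
      rw [div_eq_inv_mul, mul_smul, ← this, smul_smul]; norm_num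
    rcases R.reduced β hβP _ (h2 ▸ haP) with h3 | h3
    · rw [h3, one_smul] at h2; exact hne h2.symm
    · rw [h3, neg_one_smul] at h2
      exact hB.not_both β ⟨hβ, h2 ▸ hB.delta_sub ha⟩
  have hm := ih _ hlt _ hβ' rfl
  have hs : R.refl a ∈ WsubJ R Δ := Subgroup.subset_closure ⟨a, ha, rfl⟩
  have : R.refl β = R.refl a * R.refl (R.refl a β) * R.refl a := by
    rw [← hconj]
    ext x; simp [refl_refl R haP]
  rw [this]
  exact mul_mem (mul_mem hs hm) hs

lemma weyl_eq (hB : IsBase R Pos Δ) : weylGroup R = WsubJ R Δ := by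
  apply le_antisymm
  · unfold weylGroup
    rw [Subgroup.closure_le]
    rintro _ ⟨α, hα, rfl⟩
    rcases hB.mem_or_neg α hα with h | h
    · exact refl_gen_pos hB _ α h rfl
    · have := conj_refl R (refl_mem R hα) hα
      rw [refl_self R hα, refl_mul R hα, one_mul, refl_inv R hα] at this
      rw [this]
      exact refl_gen_pos hB _ _ h rfl
  · apply Subgroup.closure_mono
    rintro _ ⟨α, hα, rfl⟩
    exact ⟨α, hB.pos_sub (hB.delta_sub hα), rfl⟩

lemma WsubJ_le (hB : IsBase R Pos Δ) {J : Set V} (hJ : J ⊆ Δ) : WsubJ R J ≤ weylGroup R := by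
  apply Subgroup.closure_mono
  rintro _ ⟨α, hα, rfl⟩
  exact ⟨α, hB.pos_sub (hB.delta_sub (hJ hα)), rfl⟩

lemma refls_inv (hB : IsBase R Pos Δ) {x : V ≃ₗ[ℝ] V} (hx : x ∈ refls R Δ) : x⁻¹ = x := by
  obtain ⟨a, ha, rfl⟩ := hx
  exact refl_inv R (hB.pos_sub (hB.delta_sub ha))

lemma exists_word (hB : IsBase R Pos Δ) {w : V ≃ₗ[ℝ] V} (hw : w ∈ weylGroup R) :
    ∃ ls : List (V ≃ₗ[ℝ] V), ls.length = len R Δ w ∧ (∀ x ∈ ls, x ∈ refls R Δ) ∧ ls.prod = w := by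
  have : ∃ ls : List (V ≃ₗ[ℝ] V), (∀ x ∈ ls, x ∈ refls R Δ) ∧ ls.prod = w := by
    rw [weyl_eq hB] at hw
    have hw2 : w ∈ (Subgroup.closure (refls R Δ)).toSubmonoid := hw
    rw [Subgroup.closure_toSubmonoid] at hw2
    obtain ⟨l, hl, h⟩ := Submonoid.exists_list_of_mem_closure hw2
    refine ⟨l, fun x hx => ?_, h⟩
    rcases hl x hx with h | h
    · exact h
    · rw [Set.mem_inv] at h
      have := refls_inv hB h
      rw [inv_inv] at this
      rwa [← this] at h
  obtain ⟨ls, h1, h2⟩ := this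
  have hne : {n | ∃ ls : List (V ≃ₗ[ℝ] V), ls.length = n ∧ (∀ x ∈ ls, x ∈ refls R Δ) ∧
    ls.prod = w}.Nonempty := ⟨_, ls, rfl, h1, h2⟩
  exact Nat.sInf_mem hne

lemma len_le {ls : List (V ≃ₗ[ℝ] V)} (h : ∀ x ∈ ls, x ∈ refls R Δ) :
    len R Δ ls.prod ≤ ls.length := Nat.sInf_le ⟨ls, rfl, h, rfl⟩

lemma word_mem (hB : IsBase R Pos Δ) {ls : List (V ≃ₗ[ℝ] V)} (h : ∀ x ∈ ls, x ∈ refls R Δ) :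
    ls.prod ∈ weylGroup R := by
  rw [weyl_eq hB]
  exact Subgroup.list_prod_mem _ fun x hx => Subgroup.subset_closure (h x hx)

lemma exchange (hB : IsBase R Pos Δ) {a : V} (ha : a ∈ Δ) (ls : List (V ≃ₗ[ℝ] V))
    (h : ∀ x ∈ ls, x ∈ refls R Δ) (hn : ls.prod a ∉ Pos) :
    ∃ ls' : List (V ≃ₗ[ℝ] V), ls'.length + 1 = ls.length ∧ (∀ x ∈ ls', x ∈ refls R Δ) ∧
      ls'.prod = ls.prod * R.refl a := by
  have haP := hB.pos_sub (hB.delta_sub ha)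
  induction ls with
  | nil => exact absurd (hB.delta_sub ha) (by simpa using hn)
  | cons s l ih =>
    have hl : ∀ x ∈ l, x ∈ refls R Δ := fun x hx => h x (List.mem_cons_of_mem _ hx)
    have hs : s ∈ refls R Δ := h s List.mem_cons_self
    by_cases hp : l.prod a ∈ Pos
    · obtain ⟨b, hb, rfl⟩ := hs
      have hbP := hB.pos_sub (hB.delta_sub hb)
      rw [List.prod_cons, LinearEquiv.mul_apply] at hn
      have he : l.prod a = b := by
        by_contra hne
        exact hn (simple_perm hB hp hb hne)
      refine ⟨l, by simp, hl, ?_⟩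
      have hc := conj_refl R (word_mem hB hl) haP
      rw [he] at hc
      rw [List.prod_cons, ← hc]
      simp only [mul_assoc, inv_mul_cancel_left, refl_mul R haP, mul_one]
    · obtain ⟨l', h1, h2, h3⟩ := ih hl hp
      refine ⟨s :: l', by simp [h1], ?_, ?_⟩
      · intro x hx
        rcases List.mem_cons.1 hx with rfl | hx
        · exact hs
        · exact h2 x hx
      · rw [List.prod_cons, List.prod_cons, h3, mul_assoc]

lemma len_right_lt (hB : IsBase R Pos Δ) {w : V ≃ₗ[ℝ] V} (hw : w ∈ weylGroup R) {a : V}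
    (ha : a ∈ Δ) (hn : w a ∉ Pos) : len R Δ (w * R.refl a) < len R Δ w := by
  obtain ⟨l, h1, h2, rfl⟩ := exists_word hB hw
  obtain ⟨l', h3, h4, h5⟩ := exchange hB ha l h2 hn
  have := len_le h4
  rw [h5] at this
  omega

lemma len_right_gt (hB : IsBase R Pos Δ) {w : V ≃ₗ[ℝ] V} (hw : w ∈ weylGroup R) {a : V}
    (ha : a ∈ Δ) (hn : w a ∈ Pos) : len R Δ w < len R Δ (w * R.refl a) := by
  have haP := hB.pos_sub (hB.delta_sub ha)
  have := len_right_lt hB (mul_mem hw (refl_mem R haP)) ha (by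
    rw [LinearEquiv.mul_apply, refl_self R haP, map_neg]
    exact fun h => hB.not_both _ ⟨hn, h⟩)
  rwa [mul_assoc, refl_mul R haP, mul_one] at this

lemma len_inv_le (hB : IsBase R Pos Δ) {w : V ≃ₗ[ℝ] V} (hw : w ∈ weylGroup R) :
    len R Δ w⁻¹ ≤ len R Δ w := by
  obtain ⟨l, h1, h2, rfl⟩ := exists_word hB hw
  rw [List.prod_inv_reverse, ← h1]
  refine le_trans (len_le ?_) (by simp)
  intro x hx
  simp only [List.mem_reverse, List.mem_map] at hx
  obtain ⟨y, hy, rfl⟩ := hx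
  rw [refls_inv hB (h2 y hy)]
  exact h2 y hy

lemma len_inv (hB : IsBase R Pos Δ) {w : V ≃ₗ[ℝ] V} (hw : w ∈ weylGroup R) :
    len R Δ w⁻¹ = len R Δ w := by
  apply le_antisymm (len_inv_le hB hw)
  simpa using len_inv_le hB (inv_mem hw)

lemma len_left_lt (hB : IsBase R Pos Δ) {w : V ≃ₗ[ℝ] V} (hw : w ∈ weylGroup R) {a : V}
    (ha : a ∈ Δ) (hn : w⁻¹ a ∉ Pos) : len R Δ (R.refl a * w) < len R Δ w := by
  have haP := hB.pos_sub (hB.delta_sub ha)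
  have := len_right_lt hB (inv_mem hw) ha hn
  rw [← len_inv hB (mul_mem (refl_mem R haP) hw), mul_inv_rev, refl_inv R haP]
  rwa [len_inv hB hw] at this

lemma len_left_gt (hB : IsBase R Pos Δ) {w : V ≃ₗ[ℝ] V} (hw : w ∈ weylGroup R) {a : V}
    (ha : a ∈ Δ) (hn : w⁻¹ a ∈ Pos) : len R Δ w < len R Δ (R.refl a * w) := by
  have haP := hB.pos_sub (hB.delta_sub ha)
  have := len_right_gt hB (inv_mem hw) ha hn
  rw [← len_inv hB (mul_mem (refl_mem R haP) hw), mul_inv_rev, refl_inv R haP]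
  rwa [len_inv hB hw] at this

lemma eq_one (hB : IsBase R Pos Δ) {w : V ≃ₗ[ℝ] V} (hw : w ∈ weylGroup R)
    (h : ∀ a ∈ Δ, w a ∈ Pos) : w = 1 := by
  obtain ⟨l, h1, h2, h3⟩ := exists_word hB hw
  rcases List.eq_nil_or_concat l with rfl | ⟨l', s, rfl⟩
  · simpa using h3.symm
  · exfalso
    obtain ⟨a, ha, rfl⟩ := h2 s (by simp)
    have haP := hB.pos_sub (hB.delta_sub ha)
    have h4 := len_right_gt hB hw ha (h a ha)
    have h5 : w * R.refl a = l'.prod := by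
      rw [← h3]; simp [mul_assoc, refl_mul R haP]
    rw [h5] at h4
    have h6 := len_le (R := R) (Δ := Δ) (ls := l') (fun x hx => h2 x (by simp [hx]))
    simp at h1
    omega

lemma co_sub (hB : IsBase R Pos Δ) {c : V → V →ₗ[ℝ] ℝ} (hc : Co Δ c) {K : Set V} (hK : K ⊆ Δ)
    {u : V ≃ₗ[ℝ] V} (hu : u ∈ WsubJ R K) {a : V} (ha : a ∈ Δ) (haK : a ∉ K) :
    ∀ x, c a (u x) = c a x := by
  have hs : ∀ y ∈ refls R K, ∀ x, c a (y x) = c a x := by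
    rintro _ ⟨b, hb, rfl⟩ x
    rw [refl_apply R (hB.pos_sub (hB.delta_sub (hK hb))), map_sub, map_smul,
      hc.ne a ha b (hK hb) (fun h => haK (h ▸ hb))]
    simp
  unfold WsubJ at hu
  induction hu using Subgroup.closure_induction'' with
  | mem y hy => exact hs y hy
  | inv_mem y hy =>
    intro x
    rw [← hs y hy (y⁻¹ x), app_inv]
  | one => intro x; rfl
  | mul x y _ _ hx hy => intro z; rw [LinearEquiv.mul_apply, hx, hy]

/-- An element of `W_K` keeps positive any positive root not supported in `K`. -/
lemma pos_sub_apply (hB : IsBase R Pos Δ) {c : V → V →ₗ[ℝ] ℝ} (hc : Co Δ c) {K : Set V}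
    (hK : K ⊆ Δ) {u : V ≃ₗ[ℝ] V} (hu : u ∈ WsubJ R K) {β : V} (hβ : β ∈ Pos)
    (h : ¬ ∀ a ∈ Δ, a ∉ K → c a β = 0) : u β ∈ Pos := by
  push Not at h
  obtain ⟨a, ha, haK, h0⟩ := h
  refine pos_of_co hB hc (weyl_phi R (WsubJ_le hB hK hu) _ (hB.pos_sub hβ)) ha ?_
  rw [co_sub hB hc hK hu ha haK]
  exact lt_of_le_of_ne (co_nonneg hB hc hβ ha) h0.symm

lemma rep_unique (hB : IsBase R Pos Δ) {J : Set V} (hJ : J ⊆ Δ) {x y : V ≃ₗ[ℝ] V}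
    (hx : x ∈ WupJ R Pos J) (hy : y ∈ WupJ R Pos J) (h : x⁻¹ * y ∈ WsubJ R J) : x = y := by
  obtain ⟨c, hc⟩ := exists_co hB
  have hW := WsubJ_le hB hJ h
  suffices x⁻¹ * y = 1 by rwa [inv_mul_eq_one] at this
  apply eq_one hB hW
  intro a ha
  have haΔ := hB.delta_sub ha
  have hP := weyl_phi R hW a (hB.pos_sub haΔ)
  by_cases haJ : a ∈ J
  · by_contra hn
    have hn' := (not_pos hB hP).1 hn
    have hxe : x (-((x⁻¹ * y) a)) = - y a := by
      rw [map_neg, LinearEquiv.mul_apply, app_inv]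
    have := cone hB hc (K := J) hn' (by
      intro b hb hbJ
      rw [map_neg, co_sub hB hc hJ h hb hbJ, hc.ne b hb a ha (fun h => hbJ (h ▸ haJ)), neg_zero])
      x.toLinearMap (fun b _ hb => hx.2 b hb) (weyl_phi R hx.1 _ (hB.pos_sub hn'))
    rw [LinearEquiv.coe_coe, hxe] at this
    exact hB.not_both _ ⟨hy.2 a haJ, this⟩
  · apply pos_sub_apply hB hc hJ h haΔ
    intro hcon
    have := hcon a ha haJ
    rw [hc.self a ha] at this
    exact one_ne_zero this

lemma longest_neg (hB : IsBase R Pos Δ) {K : Set V} (hK : K ⊆ Δ) {g : V ≃ₗ[ℝ] V}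
    (hg : IsLongestIn R Δ (WsubJ R K) g) {a : V} (ha : a ∈ K) : g a ∉ Pos := by
  intro h
  have h1 := len_right_gt hB (WsubJ_le hB hK hg.1) (hK ha) h
  have h2 := hg.2 _ (mul_mem hg.1 (Subgroup.subset_closure ⟨a, ha, rfl⟩))
  omega

lemma longest_inv (hB : IsBase R Pos Δ) {K : Set V} (hK : K ⊆ Δ) {g : V ≃ₗ[ℝ] V}
    (hg : IsLongestIn R Δ (WsubJ R K) g) : IsLongestIn R Δ (WsubJ R K) g⁻¹ :=
  ⟨inv_mem hg.1, fun v hv => by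
    rw [len_inv hB (WsubJ_le hB hK hg.1)]; exact hg.2 v hv⟩

/-- flipping of roots supported in `K` -/
lemma flip (hB : IsBase R Pos Δ) {c : V → V →ₗ[ℝ] ℝ} (hc : Co Δ c) {K : Set V} (hK : K ⊆ Δ)
    {g : V ≃ₗ[ℝ] V} (hgW : g ∈ weylGroup R) (hg : ∀ a ∈ K, g a ∉ Pos) {β : V} (hβ : β ∈ Pos)
    (hs : ∀ a ∈ Δ, a ∉ K → c a β = 0) : -g β ∈ Pos := by
  have := cone hB hc hβ hs (-g.toLinearMap) (fun a _ ha => by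
      have := (not_pos hB (weyl_phi R hgW a (hB.pos_sub (hB.delta_sub (hK ha))))).1 (hg a ha)
      simpa using this) (by
      have := neg_mem_phi R (weyl_phi R hgW _ (hB.pos_sub hβ))
      simpa using this)
  simpa using this

lemma flipD (hB : IsBase R Pos Δ)
    {g : V ≃ₗ[ℝ] V} (hgW : g ∈ weylGroup R) (hg : ∀ a ∈ Δ, g a ∉ Pos) {β : V} (hβ : β ∈ Pos) :
    -g β ∈ Pos := by
  obtain ⟨c, hc⟩ := exists_co hB
  exact flip hB hc (le_refl _) hgW hg hβ (fun a h1 h2 => absurd h1 h2)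

/-- `-w_Δ` permutes the simple roots -/
lemma star_simple (hB : IsBase R Pos Δ) {g : V ≃ₗ[ℝ] V}
    (hg : IsLongestIn R Δ (WsubJ R Δ) g) {a : V} (ha : a ∈ Δ) : -g a ∈ Δ := by
  obtain ⟨c, hc⟩ := exists_co hB
  have hgW := WsubJ_le hB (le_refl _) hg.1
  have hg1 := fun a (ha : a ∈ Δ) => longest_neg hB (le_refl _) hg ha
  have hg2 := fun a (ha : a ∈ Δ) => longest_neg hB (le_refl _) (longest_inv hB (le_refl _) hg) ha
  have hβ := flipD hB hgW hg1 (hB.delta_sub ha)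
  by_contra hcon
  have hγ : ∀ i ∈ Δ, -g⁻¹ i ∈ Pos := fun i hi => flipD hB (inv_mem hgW) hg2 (hB.delta_sub hi)
  have hγa : ∀ i ∈ Δ, ∃ j ∈ Δ, j ≠ a ∧ 0 < c j (-g⁻¹ i) := by
    intro i hi
    by_contra h
    push Not at h
    have h1 := eq_of_supp hB hc (hγ i hi) ha (fun b hb hba =>
      le_antisymm (h b hb hba) (co_nonneg hB hc (hγ i hi) hb))
    apply hcon
    rw [← h1, map_neg, app_inv, neg_neg]; exact hi
  obtain ⟨m, hm, hβe⟩ := hB.decomp _ hβ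
  have hne : m.support.Nonempty := by
    by_contra h
    rw [Finset.not_nonempty_iff_eq_empty] at h
    have : -g a = 0 := by rw [hβe, Finsupp.sum, h, Finset.sum_empty]
    exact R.zero_not_mem (this ▸ hB.pos_sub hβ)
  obtain ⟨i, hi⟩ := hne
  obtain ⟨j, hj, hja, hpos⟩ := hγa i (hm hi)
  have hsum : a = ∑ k ∈ m.support, (m k : ℝ) • (-g⁻¹ k) := by
    have h1 : a = -g⁻¹ (-g a) := by rw [map_neg, inv_app, neg_neg]
    rw [hβe, Finsupp.sum, map_sum] at h1
    rw [h1, ← Finset.sum_neg_distrib]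
    refine Finset.sum_congr rfl fun k _ => ?_
    rw [map_smul, smul_neg]
  have h0 : c j a = 0 := hc.ne j hj a ha hja
  rw [hsum, map_sum] at h0
  have h2 : 0 < ∑ k ∈ m.support, c j ((m k : ℝ) • (-g⁻¹ k)) := by
    refine Finset.sum_pos' (fun k hk => ?_) ⟨i, hi, ?_⟩
    · rw [map_smul, smul_eq_mul]
      exact mul_nonneg (by positivity) (co_nonneg hB hc (hγ k (hm hk)) hj)
    · rw [map_smul, smul_eq_mul]
      refine mul_pos ?_ hpos
      have := Finsupp.mem_support_iff.1 hi
      positivity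
  exact absurd h0 h2.ne'

lemma pJ_eq (hB : IsBase R Pos Δ) {J : Set V} (hJ : J ⊆ Δ) {pJ : (V ≃ₗ[ℝ] V) → (V ≃ₗ[ℝ] V)}
    (hpJ : IsProjJ R Pos J pJ) {x : V ≃ₗ[ℝ] V} (hx : x ∈ WupJ R Pos J) : pJ x = x :=
  rep_unique hB hJ (hpJ x hx.1).1 hx (hpJ x hx.1).2

lemma mem_up (hB : IsBase R Pos Δ) {J : Set V} {w : V ≃ₗ[ℝ] V} (hw : w ∈ WupJ R Pos J) {a : V}
    (ha : a ∈ Δ) (h : w⁻¹ a ∉ J) : R.refl a * w ∈ WupJ R Pos J := by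
  refine ⟨mul_mem (refl_mem R (hB.pos_sub (hB.delta_sub ha))) hw.1, fun α hα => ?_⟩
  refine simple_perm hB (hw.2 α hα) ha ?_
  intro he
  have he' : w _ = a := he
  rw [← he', inv_app] at h
  exact h hα

lemma desc_lt (hB : IsBase R Pos Δ) {J : Set V} (hJ : J ⊆ Δ) {pJ : (V ≃ₗ[ℝ] V) → (V ≃ₗ[ℝ] V)}
    (hpJ : IsProjJ R Pos J pJ) {w : V ≃ₗ[ℝ] V} (hw : w ∈ WupJ R Pos J) {a : V}
    (ha : a ∈ Δ) (h : w⁻¹ a ∉ Pos) : len R Δ (pJ (R.refl a * w)) < len R Δ w := by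
  rw [pJ_eq hB hJ hpJ (mem_up hB hw ha (fun h' => h (hB.delta_sub (hJ h'))))]
  exact len_left_lt hB hw.1 ha h

lemma nondesc_le (hB : IsBase R Pos Δ) {J : Set V} (hJ : J ⊆ Δ) {pJ : (V ≃ₗ[ℝ] V) → (V ≃ₗ[ℝ] V)}
    (hpJ : IsProjJ R Pos J pJ) {w : V ≃ₗ[ℝ] V} (hw : w ∈ WupJ R Pos J) {a : V}
    (ha : a ∈ Δ) (h : w⁻¹ a ∈ Pos) : len R Δ w ≤ len R Δ (pJ (R.refl a * w)) := by
  by_cases hj : w⁻¹ a ∈ J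
  · have haP := hB.pos_sub (hB.delta_sub ha)
    have hsw := mul_mem (refl_mem R haP) hw.1
    have : pJ (R.refl a * w) = w := by
      refine rep_unique hB hJ (hpJ _ hsw).1 hw ?_
      have h1 := (hpJ _ hsw).2
      have h2 := conj_refl R hw.1 (hB.pos_sub h)
      rw [app_inv] at h2
      rw [← h2] at h1 ⊢
      have h3 : R.refl (w⁻¹ a) ∈ WsubJ R J := Subgroup.subset_closure ⟨_, hj, rfl⟩
      have h4 := mul_mem h1 (inv_mem h3)
      convert h4 using 1
      group
    rw [this]
  · rw [pJ_eq hB hJ hpJ (mem_up hB hw ha hj)]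
    exact (len_left_gt hB hw.1 ha h).le

lemma mem_V (hB : IsBase R Pos Δ) {J : Set V} {w : V ≃ₗ[ℝ] V} :
    w ∈ VupJ R Pos Δ J ↔ w ∈ WupJ R Pos J ∧ ∀ α ∈ Δ, α ∉ J → w α ∉ Pos := by
  constructor
  · rintro ⟨h1, h2⟩
    refine ⟨h1, fun α hα hαJ hp => h2 α hα hαJ ⟨h1.1, ?_⟩⟩
    rintro β (hβ | hβ)
    · exact h1.2 β hβ
    · rw [Set.mem_singleton_iff.1 hβ]; exact hp
  · rintro ⟨h1, h2⟩
    exact ⟨h1, fun α hα hαJ hp => h2 α hα hαJ (hp.2 α (Or.inr rfl))⟩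

lemma V_up (hB : IsBase R Pos Δ) {J : Set V} {w : V ≃ₗ[ℝ] V} (hw : w ∈ VupJ R Pos Δ J) {a : V}
    (ha : a ∈ Δ) (h : w⁻¹ a ∉ J) (hp : w⁻¹ a ∈ Pos) : R.refl a * w ∈ VupJ R Pos Δ J := by
  rw [mem_V hB] at hw ⊢
  have haP := hB.pos_sub (hB.delta_sub ha)
  refine ⟨mem_up hB hw.1 ha h, fun α hα hαJ hcon => ?_⟩
  have hαP := weyl_phi R hw.1.1 _ (hB.pos_sub (hB.delta_sub hα))
  have h1 := (not_pos hB hαP).1 (hw.2 α hα hαJ)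
  have h2 : -w α = a := by
    by_contra hne
    have := simple_perm hB h1 ha hne
    rw [map_neg] at this
    exact hB.not_both _ ⟨hcon, this⟩
  rw [← h2, map_neg, inv_app] at hp
  exact hB.not_both _ ⟨hB.delta_sub hα, hp⟩

/-- chains going up inside `W^J` -/
def Reach (R : RootSystemData V) (Δ E : Set V) (pJ : (V ≃ₗ[ℝ] V) → (V ≃ₗ[ℝ] V))
    (w w' : V ≃ₗ[ℝ] V) : Prop :=
  ∃ r : ℕ, ∃ σ : ℕ → (V ≃ₗ[ℝ] V), (∀ m, 1 ≤ m → m ≤ r → σ m ∈ refls R E) ∧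
    (∀ m, 1 ≤ m → m ≤ r →
      len R Δ (chainElt pJ σ w (m - 1)) < len R Δ (chainElt pJ σ w m)) ∧
    chainElt pJ σ w r = w' ∧ chainProd σ r * w = w'

lemma chainProd_zero (σ : ℕ → (V ≃ₗ[ℝ] V)) : chainProd σ 0 = 1 := by simp [chainProd]

lemma chainProd_succ (σ : ℕ → (V ≃ₗ[ℝ] V)) (r : ℕ) :
    chainProd σ (r + 1) = σ (r + 1) * chainProd σ r := by
  simp [chainProd, List.range'_concat, add_comm]

lemma chainProd_congr (σ τ : ℕ → (V ≃ₗ[ℝ] V)) (r : ℕ) (h : ∀ m, m ≤ r → σ m = τ m) :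
    chainProd σ r = chainProd τ r := by
  induction r with
  | zero => simp [chainProd]
  | succ r ih => rw [chainProd_succ, chainProd_succ, h _ le_rfl, ih (fun m hm => h m (by omega))]

lemma chainElt_congr (pJ : (V ≃ₗ[ℝ] V) → (V ≃ₗ[ℝ] V)) (w : V ≃ₗ[ℝ] V)
    (σ τ : ℕ → (V ≃ₗ[ℝ] V)) (r : ℕ) (h : ∀ m, m ≤ r → σ m = τ m) :
    chainElt pJ σ w r = chainElt pJ τ w r := by
  unfold chainElt; rw [chainProd_congr σ τ r h]

lemma Reach.refl (R : RootSystemData V) (Δ E : Set V) (pJ : (V ≃ₗ[ℝ] V) → (V ≃ₗ[ℝ] V))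
    (w : V ≃ₗ[ℝ] V) : Reach R Δ E pJ w w :=
  ⟨0, fun _ => 1, fun m h1 h2 => by omega, fun m h1 h2 => by omega, by simp [chainElt],
    by rw [chainProd_zero, one_mul]⟩

lemma Reach.step {E : Set V} {pJ : (V ≃ₗ[ℝ] V) → (V ≃ₗ[ℝ] V)} {w w' s : V ≃ₗ[ℝ] V}
    (h : Reach R Δ E pJ w w') (hs : s ∈ refls R E) (hp : pJ (s * w') = s * w')
    (hl : len R Δ w' < len R Δ (s * w')) : Reach R Δ E pJ w (s * w') := by
  obtain ⟨r, σ, h1, h2, h3, h4⟩ := h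
  let τ := Function.update σ (r + 1) s
  have hτ : ∀ k, k ≤ r → ∀ m, m ≤ k → τ m = σ m := fun k hk m hm =>
    Function.update_of_ne (by omega) _ _
  have hτr : τ (r + 1) = s := Function.update_self _ _ _
  have h5 : chainProd τ (r + 1) * w = s * w' := by
    rw [chainProd_succ, hτr, chainProd_congr τ σ r (hτ r le_rfl), mul_assoc, h4]
  have h6 : chainElt pJ τ w (r + 1) = s * w' := by
    unfold chainElt
    rw [if_neg (by omega), h5, hp]
  refine ⟨r + 1, τ, ?_, ?_, h6, h5⟩
  · intro m hm1 hm2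
    by_cases hm : m = r + 1
    · rw [hm, hτr]; exact hs
    · rw [hτ r le_rfl m (by omega)]; exact h1 m hm1 (by omega)
  · intro m hm1 hm2
    by_cases hm : m = r + 1
    · subst hm
      rw [h6, Nat.add_sub_cancel, chainElt_congr pJ w τ σ r (hτ r le_rfl), h3]
      exact hl
    · rw [chainElt_congr pJ w τ σ m (hτ m (by omega)),
        chainElt_congr pJ w τ σ (m - 1) (hτ (m - 1) (by omega))]
      exact h2 m hm1 (by omega)

lemma Reach.lt {E : Set V} (hE : E ⊆ Δ) {pJ : (V ≃ₗ[ℝ] V) → (V ≃ₗ[ℝ] V)} {w w' : V ≃ₗ[ℝ] V}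
    (h : Reach R Δ E pJ w w') (hne : w' ≠ w) : ltJ (refls R Δ) (len R Δ) pJ w w' := by
  obtain ⟨r, σ, h1, h2, h3, h4⟩ := h
  refine ⟨r, ?_, σ, ?_, h2, h3⟩
  · by_contra h0
    have : r = 0 := by omega
    subst this
    rw [chainProd_zero, one_mul] at h4
    exact hne h4.symm
  · intro m hm1 hm2
    obtain ⟨a, ha, he⟩ := h1 m hm1 hm2
    exact ⟨a, hE ha, he⟩

lemma Reach.mem {E : Set V} {pJ : (V ≃ₗ[ℝ] V) → (V ≃ₗ[ℝ] V)} {w w' : V ≃ₗ[ℝ] V}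
    (h : Reach R Δ E pJ w w') : w' * w⁻¹ ∈ WsubJ R E := by
  obtain ⟨r, σ, h1, h2, h3, h4⟩ := h
  rw [← h4, mul_inv_cancel_right]
  refine Subgroup.list_prod_mem _ fun x hx => ?_
  simp only [List.mem_reverse, List.mem_map, List.mem_range'_1] at hx
  obtain ⟨m, hm, rfl⟩ := hx
  exact Subgroup.subset_closure (h1 m hm.1 (by omega))

lemma conj_sub {A B : Set V} (hA : A ⊆ R.Phi) {g : V ≃ₗ[ℝ] V} (hg : g ∈ weylGroup R)
    (h : ∀ a ∈ A, -g a ∈ B) {u : V ≃ₗ[ℝ] V} (hu : u ∈ WsubJ R A) :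
    g * u * g⁻¹ ∈ WsubJ R B := by
  have : WsubJ R A ≤ (WsubJ R B).comap (MulAut.conj g).toMonoidHom := by
    unfold WsubJ
    rw [Subgroup.closure_le]
    rintro _ ⟨a, ha, rfl⟩
    have hP := weyl_phi R hg a (hA ha)
    have e1 := conj_refl R (refl_mem R hP) hP
    rw [refl_self R hP, refl_mul R hP, one_mul, refl_inv R hP] at e1
    have : g * R.refl a * g⁻¹ ∈ Subgroup.closure (refls R B) := by
      rw [conj_refl R hg (hA ha), e1]
      exact Subgroup.subset_closure ⟨_, h a ha, rfl⟩
    simpa using this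
  simpa using this hu

end helpers

/-- Let `J ⊆ Δ`.  For each `w ∈ V^J` with `w ≠ z^J = w_Δ w_J` there exist
`w' ∈ V^J` and `s ∈ S` such that `w <_J w'`, `ℓ((sw)^J) < ℓ(w)` and
`ℓ((sw')^J) ≥ ℓ(w')`. -/
theorem statement_7 {V : Type} [AddCommGroup V] [Module ℝ V]
    (R : RootSystemData V) (Pos Δ : Set V) (hBase : IsBase R Pos Δ)
    (J : Set V) (hJ : J ⊆ Δ)
    (pJ : (V ≃ₗ[ℝ] V) → (V ≃ₗ[ℝ] V)) (hpJ : IsProjJ R Pos J pJ)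
    (wD : V ≃ₗ[ℝ] V) (hwD : IsLongestIn R Δ (weylGroup R) wD)
    (wJ : V ≃ₗ[ℝ] V) (hwJ : IsLongestIn R Δ (WsubJ R J) wJ)
    (w : V ≃ₗ[ℝ] V) (hw : w ∈ VupJ R Pos Δ J) (hne : w ≠ wD * wJ) :
    ∃ w' ∈ VupJ R Pos Δ J, ∃ s ∈ refls R Δ,
      ltJ (refls R Δ) (len R Δ) pJ w w' ∧
      len R Δ (pJ (s * w)) < len R Δ w ∧
      len R Δ w' ≤ len R Δ (pJ (s * w')) := by
  obtain ⟨c, hc⟩ := exists_co hBase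
  have hΔP : Δ ⊆ R.Phi := fun a ha => hBase.pos_sub (hBase.delta_sub ha)
  have hwD' := hwD
  rw [weyl_eq hBase] at hwD'
  have hwDi := longest_inv hBase le_rfl hwD'
  have hwJi := longest_inv hBase hJ hwJ
  have hwJW := WsubJ_le hBase hJ hwJ.1
  have hDneg : ∀ a ∈ Δ, wD a ∉ Pos := fun a ha => longest_neg hBase le_rfl hwD' ha
  have hDineg : ∀ a ∈ Δ, wD⁻¹ a ∉ Pos := fun a ha => longest_neg hBase le_rfl hwDi ha
  have hJneg : ∀ a ∈ J, wJ a ∉ Pos := fun a ha => longest_neg hBase hJ hwJ ha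
  have hJineg : ∀ a ∈ J, wJ⁻¹ a ∉ Pos := fun a ha => longest_neg hBase hJ hwJi ha
  let E : Set V := {a | a ∈ Δ ∧ w⁻¹ a ∈ Pos}
  have hE : E ⊆ Δ := fun a ha => ha.1
  -- a maximal element
  obtain ⟨w', ⟨hw'V, hreach⟩, hmax⟩ : ∃ w', (w' ∈ VupJ R Pos Δ J ∧ Reach R Δ E pJ w w') ∧
      ∀ x, (x ∈ VupJ R Pos Δ J ∧ Reach R Δ E pJ w x) → len R Δ x ≤ len R Δ w' := by
    by_contra hcon
    push Not at hcon
    have : ∀ n : ℕ, ∃ x, (x ∈ VupJ R Pos Δ J ∧ Reach R Δ E pJ w x) ∧ n ≤ len R Δ x := by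
      intro n
      induction n with
      | zero => exact ⟨w, ⟨hw, Reach.refl _ _ _ _ _⟩, Nat.zero_le _⟩
      | succ n ih =>
        obtain ⟨x, hx, hn⟩ := ih
        obtain ⟨y, hy, hl⟩ := hcon x hx
        exact ⟨y, hy, by omega⟩
    obtain ⟨x, hx, hn⟩ := this (len R Δ wD + 1)
    have := hwD.2 x hx.1.1.1
    omega
  have hwU := hw.1
  have hw'U := hw'V.1
  have hEdesc : ∀ a ∈ E, w'⁻¹ a ∈ Pos → w'⁻¹ a ∈ J := by
    intro a ha hp
    by_contra hj
    have h1 := V_up hBase hw'V ha.1 hj hp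
    have h2 := len_left_gt hBase hw'U.1 ha.1 hp
    have h3 := hmax _ ⟨h1, hreach.step ⟨a, ha, rfl⟩ (pJ_eq hBase hJ hpJ h1.1) h2⟩
    omega
  by_cases hd : ∃ d ∈ Δ, w⁻¹ d ∉ Pos ∧ w'⁻¹ d ∈ Pos
  · obtain ⟨d, hdΔ, hd1, hd2⟩ := hd
    refine ⟨w', hw'V, R.refl d, ⟨d, hdΔ, rfl⟩, hreach.lt hE ?_,
      desc_lt hBase hJ hpJ hwU hdΔ hd1, nondesc_le hBase hJ hpJ hw'U hdΔ hd2⟩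
    rintro rfl
    exact hd1 hd2
  exfalso
  push Not at hd
  apply hne
  have hall : ∀ d ∈ Δ, w'⁻¹ d ∈ Pos → w'⁻¹ d ∈ J := by
    intro d hdΔ hp
    by_cases h : w⁻¹ d ∈ Pos
    · exact hEdesc d ⟨hdΔ, h⟩ hp
    · exact absurd hp (hd d hdΔ h)
  -- `w' = z^J`
  have hz : w' = wD * wJ := by
    have hyW : wJ * w'⁻¹ ∈ weylGroup R := mul_mem hwJW (inv_mem hw'U.1)
    have hy : ∀ d ∈ Δ, (wJ * w'⁻¹) d ∉ Pos := by
      intro d hdΔ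
      by_cases hp : w'⁻¹ d ∈ Pos
      · exact hJneg _ (hall d hdΔ hp)
      · have hP := weyl_phi R (inv_mem hw'U.1) d (hΔP hdΔ)
        have hγ := (not_pos hBase hP).1 hp
        have := pos_sub_apply hBase hc hJ hwJ.1 hγ (by
          intro hs
          have h1 := cone hBase hc hγ hs w'.toLinearMap (fun a _ ha => hw'U.2 a ha)
            (weyl_phi R hw'U.1 _ (hBase.pos_sub hγ))
          rw [LinearEquiv.coe_coe, map_neg, app_inv] at h1
          exact hBase.not_both d ⟨hBase.delta_sub hdΔ, h1⟩)
        rw [map_neg] at this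
        exact fun h => hBase.not_both _ ⟨h, this⟩
    have h1 : wJ * w'⁻¹ * wD = 1 := by
      apply eq_one hBase (mul_mem hyW hwD.1)
      intro a ha
      have h2 := flipD hBase hwD.1 hDneg (hBase.delta_sub ha)
      have h3 := flipD hBase hyW hy h2
      rwa [map_neg, neg_neg] at h3
    have h4 : wD = w' * wJ⁻¹ := by
      have := eq_inv_of_mul_eq_one_right h1
      rw [this]; group
    rw [h4]; group
  have hmem := hreach.mem
  -- J* ⊆ E
  have hJE : ∀ α ∈ J, -wD α ∈ E := by
    intro α hα
    have hs := star_simple hBase hwD' (hJ hα)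
    refine ⟨hs, ?_⟩
    by_contra hcon
    apply hd _ hs hcon
    have : w'⁻¹ (-wD α) = -wJ⁻¹ α := by
      rw [hz, mul_inv_rev, LinearEquiv.mul_apply, map_neg, inv_app, map_neg]
    rw [this]
    exact (not_pos hBase (weyl_phi R (inv_mem hwJW) _ (hΔP (hJ hα)))).1 (hJineg α hα)
  have hhW : w * wD⁻¹ ∈ WsubJ R E := by
    have h1 := conj_sub (fun a ha => hΔP (hJ ha)) hwD.1 hJE hwJ.1
    have h2 := mul_mem (inv_mem hmem) h1
    convert h2 using 1
    rw [hz]; group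
  have hhW' := WsubJ_le hBase hE hhW
  have hhineg : ∀ e ∈ E, (w * wD⁻¹)⁻¹ e ∉ Pos := by
    intro e he hcon
    rw [mul_inv_rev, inv_inv, LinearEquiv.mul_apply] at hcon
    exact hBase.not_both _ ⟨hcon, flipD hBase hwD.1 hDneg he.2⟩
  have hhneg : ∀ e ∈ E, (w * wD⁻¹) e ∉ Pos := by
    intro e he hcon
    have := flip hBase hc hE (inv_mem hhW') hhineg hcon (by
      intro a ha haE
      rw [co_sub hBase hc hE hhW ha haE, hc.ne a ha e he.1 (fun h => haE (h ▸ he))])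
    rw [inv_app] at this
    exact hBase.not_both e ⟨hBase.delta_sub he.1, this⟩
  have hEJ : ∀ e ∈ E, -wD⁻¹ e ∈ J := by
    intro e he
    by_contra hj
    have hs := star_simple hBase hwDi he.1
    apply ((mem_V hBase).1 hw).2 _ hs hj
    rw [map_neg]
    exact (not_pos hBase (weyl_phi R hhW' _ (hΔP he.1))).1 (hhneg e he)
  have h5 := conj_sub (fun a ha => hΔP (hE ha)) (inv_mem hwD.1) hEJ hmem
  rw [← hz]
  refine (rep_unique hBase hJ hw'U hwU ?_).symm
  have h6 := mul_mem (inv_mem hwJ.1) (mul_mem (inv_mem h5) hwJ.1)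
  convert h6 using 1
  rw [hz]; group

end PaperSp
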